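/- Let $d\ge 0$ and let $\mathcal H=\{H_1,\dots,H_n\}$ be a finite arrangement of $n$ affine hyperplanes in $\mathbb R^d$ in general position, meaning that the intersection of any $k\le d$ of the hyperplanes is an affine subspace of dimension $d-k$ and that no $d+1$ of them have a common point. Assume $n=|\mathcal H|\ge d$. The chambers of $\mathcal H$ are the connected components of $\mathbb R^d\setminus\bigcup_{i=1}^n H_i$. The chamber graph has the chambers as vertices, two chambers being adjacent if and only if they are separated by exactly one hyperplane of $\mathcal H$ (equivalently, they share a common facet). For a set $S$ of chambers, let $\partial S$ denote the set of edges of the chamber graph with exactly one endpoint in $S$. If $|S|\le 2^{d-1}$ (for $d=0$ this reads $|S|\le\tfrac12$), then $|\partial S|\ge|S|$. -/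

import Mathlib

/-- An arrangement of `n` affine hyperplanes in `ℝ^d`, given by nonzero normal vectors and
offsets: the `i`-th hyperplane is `{x | ∑ j, normal i j * x j = offset i}`. -/
structure Arrangement (d n : ℕ) where
  normal : Fin n → (Fin d → ℝ)
  offset : Fin n → ℝ
  normal_ne : ∀ i, normal i ≠ 0

namespace Arrangement

/-- The `i`-th hyperplane of the arrangement. -/
def H {d n : ℕ} (𝓗 : Arrangement d n) (i : Fin n) : Set (Fin d → ℝ) :=
  {x | ∑ j, 𝓗.normal i j * x j = 𝓗.offset i}

/-- The positive open half-space determined by the `i`-th hyperplane. -/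
def pos {d n : ℕ} (𝓗 : Arrangement d n) (i : Fin n) : Set (Fin d → ℝ) :=
  {x | 𝓗.offset i < ∑ j, 𝓗.normal i j * x j}

/-- The negative open half-space determined by the `i`-th hyperplane. -/
def neg {d n : ℕ} (𝓗 : Arrangement d n) (i : Fin n) : Set (Fin d → ℝ) :=
  {x | ∑ j, 𝓗.normal i j * x j < 𝓗.offset i}

/-- The complement of the union of the hyperplanes. -/
def free {d n : ℕ} (𝓗 : Arrangement d n) : Set (Fin d → ℝ) := (⋃ i, 𝓗.H i)ᶜ

/-- The chambers: connected components of the complement of the hyperplanes. -/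
def chambers {d n : ℕ} (𝓗 : Arrangement d n) : Set (Set (Fin d → ℝ)) :=
  {C | ∃ x ∈ 𝓗.free, C = connectedComponentIn 𝓗.free x}

/-- General position: the intersection of any `k ≤ d` of the hyperplanes is a (nonempty) affine
subspace of dimension `d - k`, and no `d + 1` hyperplanes have a common point. In particular the
`n` hyperplanes are pairwise distinct, so that `n` is the cardinality of the arrangement. -/
def GeneralPosition {d n : ℕ} (𝓗 : Arrangement d n) : Prop :=
  (∀ A : Finset (Fin n), A.card ≤ d →
    ∃ L : AffineSubspace ℝ (Fin d → ℝ), (L : Set (Fin d → ℝ)) = ⋂ i ∈ A, 𝓗.H i ∧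
      (L : Set (Fin d → ℝ)).Nonempty ∧ Module.finrank ℝ L.direction + A.card = d) ∧
  (∀ A : Finset (Fin n), A.card = d + 1 → (⋂ i ∈ A, 𝓗.H i) = ∅)

/-- The hyperplane `H e` separates `C` from `C'`: they lie in opposite open half-spaces. -/
def Separates {d n : ℕ} (𝓗 : Arrangement d n) (e : Fin n) (C C' : Set (Fin d → ℝ)) : Prop :=
  (C ⊆ 𝓗.pos e ∧ C' ⊆ 𝓗.neg e) ∨ (C ⊆ 𝓗.neg e ∧ C' ⊆ 𝓗.pos e)

theorem separates_comm {d n : ℕ} (𝓗 : Arrangement d n) (e : Fin n) (C C' : Set (Fin d → ℝ)) :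
    𝓗.Separates e C C' ↔ 𝓗.Separates e C' C := by
  unfold Separates; tauto

theorem not_separates_self {d n : ℕ} (𝓗 : Arrangement d n) (e : Fin n) (C : 𝓗.chambers) :
    ¬ 𝓗.Separates e C C := by
  obtain ⟨C, x, hx, rfl⟩ := C
  have hm := mem_connectedComponentIn hx
  rintro (⟨h, h'⟩ | ⟨h, h'⟩)
  · exact lt_asymm (Set.mem_ofPred.1 (h hm)) (Set.mem_ofPred.1 (h' hm))
  · exact lt_asymm (Set.mem_ofPred.1 (h hm)) (Set.mem_ofPred.1 (h' hm))

/-- The chamber graph: two chambers are adjacent iff they are separated by exactly one of the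
hyperplanes. -/
def chamberGraph {d n : ℕ} (𝓗 : Arrangement d n) : SimpleGraph 𝓗.chambers where
  Adj C C' := ∃! e : Fin n, 𝓗.Separates e C C'
  symm := ⟨fun C C' h => by simpa only [𝓗.separates_comm _ (C' : Set (Fin d → ℝ)) C] using h⟩
  loopless := ⟨fun C h => 𝓗.not_separates_self _ C h.choose_spec.1⟩

/-- The edge boundary of a set `S` of chambers: the edges of the chamber graph with exactly one
endpoint in `S`. -/
def edgeBoundary {d n : ℕ} (𝓗 : Arrangement d n) (S : Set 𝓗.chambers) :
    Set (Sym2 𝓗.chambers) :=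
  {q | q ∈ 𝓗.chamberGraph.edgeSet ∧ ∃ C ∈ S, ∃ C' ∉ S, q = s(C, C')}

end Arrangement

open Function Finset

/-! ### Edge isoperimetry in the discrete cube -/

/-- Flip the `i`-th coordinate of a point of the discrete cube. -/
def flipAt {ι : Type*} [DecidableEq ι] (s : ι → Bool) (i : ι) : ι → Bool :=
  update s i (!s i)

theorem flipAt_flipAt {ι : Type*} [DecidableEq ι] (s : ι → Bool) (i : ι) :
    flipAt (flipAt s i) i = s := by
  simp [flipAt]

theorem flipAt_same {ι : Type*} [DecidableEq ι] (s : ι → Bool) (i : ι) :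
    flipAt s i i = !s i := by
  simp [flipAt]

theorem flipAt_of_ne {ι : Type*} [DecidableEq ι] (s : ι → Bool) {i j : ι} (h : j ≠ i) :
    flipAt s i j = s j := by
  simp [flipAt, h]

theorem eq_flipAt_iff {ι : Type*} [DecidableEq ι] (s t : ι → Bool) (i : ι) :
    t = flipAt s i ↔ s i ≠ t i ∧ ∀ j, j ≠ i → s j = t j := by
  constructor
  · rintro rfl
    exact ⟨by simp [flipAt_same], fun j hj => (flipAt_of_ne s hj).symm⟩
  · rintro ⟨h, h'⟩
    ext j
    by_cases hj : j = i
    · subst hj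
      rw [flipAt_same]
      revert h
      cases s j <;> cases t j <;> simp
    · rw [flipAt_of_ne s hj, h' j hj]

theorem two_mul_log_two_le {a b : ℝ} (ha : 0 < a) (hab : a ≤ b) :
    a * Real.log a + b * Real.log b + 2 * a * Real.log 2 ≤ (a + b) * Real.log (a + b) := by
  have hb : 0 < b := ha.trans_le hab
  have h1 : Real.log 2 + Real.log a ≤ Real.log (a + b) := by
    rw [← Real.log_mul (by norm_num) ha.ne']
    exact Real.log_le_log (by positivity) (by linarith)
  have h2 : a * Real.log 2 ≤ b * (Real.log (a + b) - Real.log b) := by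
    have h3 : 1 + b / a * (a / b) ≤ (1 + a / b) ^ (b / a) :=
      one_add_mul_self_le_rpow_one_add (by have : 0 < a / b := by positivity
                                           linarith) ((one_le_div ha).2 hab)
    have h4 : 1 + b / a * (a / b) = 2 := by field_simp; norm_num
    have h5 : 1 + a / b = (a + b) / b := by field_simp; ring
    rw [h4, h5] at h3
    have h6 := Real.log_le_log (by norm_num) h3
    rw [Real.log_rpow (by positivity), Real.log_div (by positivity) hb.ne'] at h6
    have h7 := mul_le_mul_of_nonneg_left h6 ha.le
    rwa [← mul_assoc, mul_div_cancel₀ _ ha.ne'] at h7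
  nlinarith [mul_le_mul_of_nonneg_left h1 ha.le]

theorem two_mul_min_mul_log_two_le (a b : ℕ) :
    (a : ℝ) * Real.log a + b * Real.log b + 2 * (min a b : ℕ) * Real.log 2
      ≤ ((a + b : ℕ) : ℝ) * Real.log ((a + b : ℕ) : ℝ) := by
  rcases Nat.eq_zero_or_pos a with rfl | ha
  · simp
  rcases Nat.eq_zero_or_pos b with rfl | hb
  · simp
  push_cast
  rcases le_total a b with h | h
  · rw [min_eq_left (by exact_mod_cast h)]
    exact two_mul_log_two_le (by exact_mod_cast ha) (by exact_mod_cast h)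
  · rw [min_eq_right (by exact_mod_cast h)]
    have := two_mul_log_two_le (a := b) (b := a) (by exact_mod_cast hb) (by exact_mod_cast h)
    rw [add_comm (b : ℝ) a] at this
    linarith

theorem card_filter_flipAt_le {ι : Type*} [DecidableEq ι] (T : Finset (ι → Bool)) (i : ι)
    [DecidableEq (ι → Bool)] :
    #{s ∈ T | flipAt s i ∈ T} ≤ 2 * min #{s ∈ T | s i = true} #{s ∈ T | ¬ s i = true} := by
  have key : ∀ b : Bool, #{s ∈ T | flipAt s i ∈ T ∧ s i = b} ≤ #{s ∈ T | s i = !b} := by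
    intro b
    apply Finset.card_le_card_of_injOn (fun s => flipAt s i)
    · intro s hs
      simp only [coe_filter, Set.mem_ofPred_eq] at hs ⊢
      exact ⟨hs.2.1, by rw [flipAt_same, hs.2.2]⟩
    · intro s _ t _ h
      rw [← flipAt_flipAt s i, ← flipAt_flipAt t i]
      exact congrArg (fun u => flipAt u i) h
  have sub : ∀ b : Bool, #{s ∈ T | flipAt s i ∈ T ∧ s i = b} ≤ #{s ∈ T | s i = b} := fun b =>
    Finset.card_le_card fun s hs => by
      simp only [mem_filter] at hs ⊢
      exact ⟨hs.1, hs.2.2⟩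
  have split : #{s ∈ T | flipAt s i ∈ T} =
      #{s ∈ T | flipAt s i ∈ T ∧ s i = true} + #{s ∈ T | flipAt s i ∈ T ∧ s i = false} := by
    rw [← card_filter_add_card_filter_not (s := {s ∈ T | flipAt s i ∈ T}) (fun s => s i = true),
      filter_filter, filter_filter]
    simp
  have h1 := key true
  have h2 := key false
  have h3 := sub true
  have h4 := sub false
  simp only [Bool.not_true, Bool.not_false, Bool.not_eq_true] at *
  omega

/-- Edge isoperimetric inequality in the discrete cube: the number of ordered pairs of points of
`T` differing in a single coordinate is at most `|T| log₂ |T|`. -/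
theorem sum_card_filter_flipAt_mul_log_two_le {ι : Type*} [DecidableEq ι]
    [DecidableEq (ι → Bool)] (A : Finset ι) (T : Finset (ι → Bool)) :
    ((∑ i ∈ A, #{s ∈ T | flipAt s i ∈ T} : ℕ) : ℝ) * Real.log 2 ≤ #T * Real.log #T := by
  induction A using Finset.induction_on generalizing T with
  | empty => simpa using mul_nonneg (Nat.cast_nonneg _) (Real.log_natCast_nonneg _)
  | insert i A hi ih =>
    rw [Finset.sum_insert hi]
    set T₁ := {s ∈ T | s i = true} with hT₁
    set T₀ := {s ∈ T | ¬ s i = true} with hT₀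
    have hcard : #T₁ + #T₀ = #T := card_filter_add_card_filter_not _
    have hsplit : ∑ j ∈ A, #{s ∈ T | flipAt s j ∈ T} =
        ∑ j ∈ A, #{s ∈ T₁ | flipAt s j ∈ T₁} + ∑ j ∈ A, #{s ∈ T₀ | flipAt s j ∈ T₀} := by
      rw [← Finset.sum_add_distrib]
      refine Finset.sum_congr rfl fun j hj => ?_
      have hji : i ≠ j := fun h => hi (h ▸ hj)
      rw [← card_filter_add_card_filter_not (s := {s ∈ T | flipAt s j ∈ T})
        (fun s => s i = true), filter_filter, filter_filter, hT₁, hT₀, filter_filter,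
        filter_filter]
      congr 2 <;> ext s <;> simp only [mem_filter, flipAt_of_ne s hji] <;> tauto
    have hmin : ((#{s ∈ T | flipAt s i ∈ T} : ℕ) : ℝ) ≤ 2 * (min #T₁ #T₀ : ℕ) := by
      exact_mod_cast card_filter_flipAt_le T i
    have hlog : (0 : ℝ) ≤ Real.log 2 := Real.log_nonneg (by norm_num)
    have h := two_mul_min_mul_log_two_le #T₁ #T₀
    rw [hcard] at h
    have h1 := ih T₁
    have h0 := ih T₀
    have h2 := mul_le_mul_of_nonneg_right hmin hlog
    rw [hsplit]
    push_cast at *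
    nlinarith

theorem sum_card_filter_flipAt_le {ι : Type*} [DecidableEq ι] [DecidableEq (ι → Bool)]
    (A : Finset ι) (T : Finset (ι → Bool)) {k : ℕ} (hT : #T ≤ 2 ^ k) :
    ∑ i ∈ A, #{s ∈ T | flipAt s i ∈ T} ≤ k * #T := by
  have h := sum_card_filter_flipAt_mul_log_two_le A T
  have hlog : (0 : ℝ) < Real.log 2 := Real.log_pos (by norm_num)
  rcases Nat.eq_zero_or_pos #T with h0 | hpos
  · rw [Finset.card_eq_zero] at h0
    simp [h0]
  have h1 : Real.log #T ≤ k * Real.log 2 := by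
    rw [← Real.log_pow]
    exact Real.log_le_log (by exact_mod_cast hpos) (by exact_mod_cast hT)
  have h2 := h.trans (mul_le_mul_of_nonneg_left h1 (Nat.cast_nonneg #T))
  rw [← mul_assoc] at h2
  have h3 := le_of_mul_le_mul_right h2 hlog
  rw [mul_comm k]
  exact_mod_cast h3

/-! ### Chambers and sign vectors -/

namespace Arrangement

variable {d n : ℕ} (𝓗 : Arrangement d n)

/-- The affine function whose zero set is the `i`-th hyperplane. -/
def val (i : Fin n) (x : Fin d → ℝ) : ℝ := 𝓗.normal i ⬝ᵥ x - 𝓗.offset i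

theorem mem_H_iff {i : Fin n} {x : Fin d → ℝ} : x ∈ 𝓗.H i ↔ 𝓗.val i x = 0 := by
  simp [H, val, dotProduct, sub_eq_zero]

theorem mem_pos_iff {i : Fin n} {x : Fin d → ℝ} : x ∈ 𝓗.pos i ↔ 0 < 𝓗.val i x := by
  simp [pos, val, dotProduct]

theorem mem_neg_iff {i : Fin n} {x : Fin d → ℝ} : x ∈ 𝓗.neg i ↔ 𝓗.val i x < 0 := by
  simp [neg, val, dotProduct]

theorem mem_free_iff {x : Fin d → ℝ} : x ∈ 𝓗.free ↔ ∀ i, 𝓗.val i x ≠ 0 := by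
  simp [free, mem_H_iff]

theorem val_add_smul (i : Fin n) (x v : Fin d → ℝ) (t : ℝ) :
    𝓗.val i (x + t • v) = 𝓗.val i x + t * (𝓗.normal i ⬝ᵥ v) := by
  simp only [val, dotProduct_add, dotProduct_smul, smul_eq_mul]
  ring

theorem continuous_val (i : Fin n) : Continuous (𝓗.val i) := by
  unfold val dotProduct
  fun_prop

open Classical in
/-- The sign vector of a point. -/
noncomputable def signs (x : Fin d → ℝ) : Fin n → Bool := fun i => decide (0 < 𝓗.val i x)

theorem signs_eq_iff {x y : Fin d → ℝ} {i : Fin n} :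
    𝓗.signs x i = 𝓗.signs y i ↔ (0 < 𝓗.val i x ↔ 0 < 𝓗.val i y) := by
  simp [signs]

theorem convex_signs_fiber (x : Fin d → ℝ) :
    Convex ℝ {y | y ∈ 𝓗.free ∧ 𝓗.signs y = 𝓗.signs x} := by
  intro y hy z hz a b ha hb hab
  simp only [Set.mem_ofPred_eq, mem_free_iff, funext_iff, signs_eq_iff] at hy hz ⊢
  have hval : ∀ i, 𝓗.val i (a • y + b • z) = a * 𝓗.val i y + b * 𝓗.val i z := by
    intro i
    simp only [val, dotProduct_add, dotProduct_smul, smul_eq_mul]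
    linear_combination 𝓗.offset i * hab
  have key : ∀ i, (0 < 𝓗.val i x → 0 < 𝓗.val i (a • y + b • z)) ∧
      (¬ 0 < 𝓗.val i x → 𝓗.val i (a • y + b • z) < 0) := by
    intro i
    rw [hval]
    refine ⟨fun h => ?_, fun h => ?_⟩
    · have h1 := (hy.2 i).2 h
      have h2 := (hz.2 i).2 h
      rcases ha.eq_or_lt with rfl | ha
      · have : b = 1 := by linarith
        subst this
        linarith
      · have := mul_pos ha h1
        have := mul_nonneg hb h2.le
        linarith
    · have h1 := (not_lt.1 (mt (hy.2 i).1 h)).lt_of_ne (hy.1 i)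
      have h2 := (not_lt.1 (mt (hz.2 i).1 h)).lt_of_ne (hz.1 i)
      rcases ha.eq_or_lt with rfl | ha
      · have : b = 1 := by linarith
        subst this
        linarith
      · have := mul_neg_of_pos_of_neg ha h1
        have := mul_nonpos_of_nonneg_of_nonpos hb h2.le
        linarith
  refine ⟨fun i => ?_, fun i => ?_⟩
  · by_cases h : 0 < 𝓗.val i x
    · exact ((key i).1 h).ne'
    · exact ((key i).2 h).ne
  · exact ⟨fun h => by_contra fun h' => lt_asymm h ((key i).2 h'), (key i).1⟩

/-- Two points in a preconnected set avoiding the hyperplanes have the same signs. -/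
theorem signs_eq_of_isPreconnected {U : Set (Fin d → ℝ)} (hU : IsPreconnected U)
    (hfree : U ⊆ 𝓗.free) {x y : Fin d → ℝ} (hx : x ∈ U) (hy : y ∈ U) :
    𝓗.signs x = 𝓗.signs y := by
  have key : ∀ {x y : Fin d → ℝ}, x ∈ U → y ∈ U → ∀ i, 0 < 𝓗.val i x → 0 < 𝓗.val i y := by
    intro x y hx hy i h
    by_contra h'
    obtain ⟨z, hz, hz0⟩ := hU.intermediate_value hy hx (𝓗.continuous_val i).continuousOn
      ⟨not_lt.1 h', h.le⟩
    exact 𝓗.mem_free_iff.1 (hfree hz) i hz0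
  funext i
  exact 𝓗.signs_eq_iff.2 ⟨key hx hy i, key hy hx i⟩

/-- Chambers are the fibers of the sign map. -/
theorem connectedComponentIn_free {x : Fin d → ℝ} (hx : x ∈ 𝓗.free) :
    connectedComponentIn 𝓗.free x = {y | y ∈ 𝓗.free ∧ 𝓗.signs y = 𝓗.signs x} := by
  apply Set.Subset.antisymm
  · intro y hy
    exact ⟨connectedComponentIn_subset _ _ hy,
      𝓗.signs_eq_of_isPreconnected isPreconnected_connectedComponentIn
        (connectedComponentIn_subset _ _) hy (mem_connectedComponentIn hx)⟩
  · exact (𝓗.convex_signs_fiber x).isPreconnected.subset_connectedComponentIn ⟨hx, rfl⟩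
      fun y hy => hy.1

/-- A point of a chamber. -/
noncomputable def point (C : 𝓗.chambers) : Fin d → ℝ := C.2.choose

theorem point_mem_free (C : 𝓗.chambers) : 𝓗.point C ∈ 𝓗.free := C.2.choose_spec.1

theorem chamber_eq (C : 𝓗.chambers) :
    (C : Set (Fin d → ℝ)) = {y | y ∈ 𝓗.free ∧ 𝓗.signs y = 𝓗.signs (𝓗.point C)} := by
  rw [← 𝓗.connectedComponentIn_free (𝓗.point_mem_free C)]
  exact C.2.choose_spec.2

/-- The sign vector of a chamber. -/
noncomputable def chamberSigns (C : 𝓗.chambers) : Fin n → Bool := 𝓗.signs (𝓗.point C)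

theorem chamberSigns_injective : Injective 𝓗.chamberSigns := by
  intro C C' h
  apply Subtype.ext
  rw [𝓗.chamber_eq C, 𝓗.chamber_eq C']
  unfold chamberSigns at h
  rw [h]

instance : Finite 𝓗.chambers := Finite.of_injective _ 𝓗.chamberSigns_injective

theorem exists_chamberSigns_eq {x : Fin d → ℝ} (hx : x ∈ 𝓗.free) :
    ∃ C : 𝓗.chambers, 𝓗.chamberSigns C = 𝓗.signs x := by
  refine ⟨⟨_, x, hx, rfl⟩, ?_⟩
  set C : 𝓗.chambers := ⟨connectedComponentIn 𝓗.free x, x, hx, rfl⟩ with hC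
  have h : x ∈ (C : Set (Fin d → ℝ)) := mem_connectedComponentIn hx
  rw [𝓗.chamber_eq C] at h
  exact h.2.symm

theorem point_mem (C : 𝓗.chambers) : 𝓗.point C ∈ (C : Set (Fin d → ℝ)) := by
  rw [𝓗.chamber_eq C]
  exact ⟨𝓗.point_mem_free C, rfl⟩

theorem chamber_subset_pos_iff (C : 𝓗.chambers) (e : Fin n) :
    (C : Set (Fin d → ℝ)) ⊆ 𝓗.pos e ↔ 𝓗.chamberSigns C e = true := by
  constructor
  · intro h
    simpa [chamberSigns, signs] using 𝓗.mem_pos_iff.1 (h (𝓗.point_mem C))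
  · intro h y hy
    rw [𝓗.chamber_eq C] at hy
    have := (congrFun hy.2 e).trans h
    rw [mem_pos_iff]
    simpa [signs] using this

theorem chamber_subset_neg_iff (C : 𝓗.chambers) (e : Fin n) :
    (C : Set (Fin d → ℝ)) ⊆ 𝓗.neg e ↔ 𝓗.chamberSigns C e = false := by
  constructor
  · intro h
    simpa [chamberSigns, signs] using (𝓗.mem_neg_iff.1 (h (𝓗.point_mem C))).le
  · intro h y hy
    rw [𝓗.chamber_eq C] at hy
    have h1 := (congrFun hy.2 e).trans h
    rw [mem_neg_iff]
    refine lt_of_le_of_ne ?_ (𝓗.mem_free_iff.1 hy.1 e)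
    simpa [signs] using h1

theorem separates_iff (C C' : 𝓗.chambers) (e : Fin n) :
    𝓗.Separates e C C' ↔ 𝓗.chamberSigns C e ≠ 𝓗.chamberSigns C' e := by
  unfold Separates
  simp only [chamber_subset_pos_iff, chamber_subset_neg_iff]
  cases 𝓗.chamberSigns C e <;> cases 𝓗.chamberSigns C' e <;> simp

theorem adj_of_eq_flipAt {C C' : 𝓗.chambers} {e : Fin n}
    (h : 𝓗.chamberSigns C' = flipAt (𝓗.chamberSigns C) e) : 𝓗.chamberGraph.Adj C C' := by
  rw [eq_flipAt_iff] at h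
  refine ⟨e, (𝓗.separates_iff C C' e).2 h.1, fun j hj => ?_⟩
  by_contra hne
  exact (𝓗.separates_iff C C' j).1 hj (h.2 j hne)

/-! ### Chambers of an arrangement in general position have at least `d` neighbours -/

theorem GeneralPosition.exists_normal_ne {𝓗 : Arrangement d n} (hgp : 𝓗.GeneralPosition)
    (hn : d ≤ n) {v : Fin d → ℝ} (hv : v ≠ 0) : ∃ j, 𝓗.normal j ⬝ᵥ v ≠ 0 := by
  by_contra! h
  obtain ⟨A, -, hA⟩ := Finset.exists_subset_card_eq (s := (Finset.univ : Finset (Fin n)))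
    (n := d) (by simpa using hn)
  obtain ⟨L, hL, ⟨p, hp⟩, hdim⟩ := hgp.1 A hA.le
  have hfin : Module.finrank ℝ L.direction = 0 := by omega
  rw [Submodule.finrank_eq_zero] at hfin
  have hpv : p + v ∈ (L : Set (Fin d → ℝ)) := by
    rw [hL] at hp ⊢
    simp only [Set.mem_iInter, mem_H_iff] at hp ⊢
    intro i hi
    have := 𝓗.val_add_smul i p v 1
    rw [one_smul, hp i hi, h i] at this
    simpa using this
  have hmem : v ∈ L.direction := by
    simpa using AffineSubspace.vsub_mem_direction hpv hp
  rw [hfin, Submodule.mem_bot] at hmem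
  exact hv hmem

/-- Distinct hyperplanes in general position are cut out by non-proportional affine functions. -/
theorem GeneralPosition.exists_mul_val_ne {𝓗 : Arrangement d n} (hgp : 𝓗.GeneralPosition)
    {j k : Fin n} (hjk : j ≠ k) {a b : ℝ} (ha : a ≠ 0) (hb : b ≠ 0) :
    ∃ x, a * 𝓗.val j x ≠ b * 𝓗.val k x := by
  by_contra! h
  have hH : 𝓗.H j = 𝓗.H k := by
    ext x
    rw [mem_H_iff, mem_H_iff]
    have := h x
    constructor
    · intro h0
      rw [h0, mul_zero] at this
      exact (mul_eq_zero.1 this.symm).resolve_left hb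
    · intro h0
      rw [h0, mul_zero] at this
      exact (mul_eq_zero.1 this).resolve_left ha
  have hd : d ≠ 0 := by
    rintro rfl
    exact 𝓗.normal_ne j (Subsingleton.elim _ _)
  have hpair : (⋂ i ∈ ({j, k} : Finset (Fin n)), 𝓗.H i) = ⋂ i ∈ ({j} : Finset (Fin n)), 𝓗.H i := by
    simp [hH]
  obtain ⟨L, hL, hne, hdim⟩ := hgp.1 {j} (by rw [card_singleton]; omega)
  rw [card_singleton] at hdim
  rcases Nat.lt_or_ge 1 d with h1 | h1
  · obtain ⟨L', hL', -, hdim'⟩ := hgp.1 {j, k} (by rw [card_pair hjk]; omega)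
    have : L' = L := SetLike.coe_injective (by rw [hL, hL', hpair])
    subst this
    rw [card_pair hjk] at hdim'
    omega
  · have := hgp.2 {j, k} (by rw [card_pair hjk]; omega)
    rw [hpair, ← hL] at this
    exact hne.ne_empty this

open MeasureTheory in
/-- The locus where two non-proportional affine functions are proportional is null. -/
theorem volume_setOf_mul_val_eq {j k : Fin n} {a b : ℝ}
    (h : ∃ x, a * 𝓗.val j x ≠ b * 𝓗.val k x) :
    volume {x | a * 𝓗.val j x = b * 𝓗.val k x} = 0 := by
  let L : AffineSubspace ℝ (Fin d → ℝ) :=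
    { carrier := {x | a * 𝓗.val j x = b * 𝓗.val k x}
      smul_vsub_vadd_mem' := by
        intro c p q r hp hq hr
        simp only [Set.mem_ofPred_eq] at hp hq hr ⊢
        have hval : ∀ i, 𝓗.val i (c • (p -ᵥ q) +ᵥ r) =
            c * (𝓗.val i p - 𝓗.val i q) + 𝓗.val i r := by
          intro i
          simp only [val, vsub_eq_sub, vadd_eq_add, dotProduct_add, dotProduct_smul,
            dotProduct_sub, smul_eq_mul]
          ring
        rw [hval, hval]
        linear_combination c * hp - c * hq + hr }
  refine Measure.addHaar_affineSubspace volume L fun htop => ?_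
  obtain ⟨x, hx⟩ := h
  have : x ∈ L := by rw [htop]; trivial
  exact hx this

open MeasureTheory in
/-- A chamber contains a point from which a line in direction `v` crosses the hyperplanes one at
a time. -/
theorem GeneralPosition.exists_generic_point {𝓗 : Arrangement d n} (hgp : 𝓗.GeneralPosition)
    (v : Fin d → ℝ) {x₀ : Fin d → ℝ} (hx₀ : x₀ ∈ 𝓗.free) :
    ∃ x ∈ 𝓗.free, 𝓗.signs x = 𝓗.signs x₀ ∧ ∀ j k, j ≠ k → 𝓗.normal j ⬝ᵥ v ≠ 0 →
      𝓗.normal k ⬝ᵥ v ≠ 0 →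
      (𝓗.normal k ⬝ᵥ v) * 𝓗.val j x ≠ (𝓗.normal j ⬝ᵥ v) * 𝓗.val k x := by
  have hopen : IsOpen 𝓗.free := by
    have : 𝓗.free = ⋂ i, {x | 𝓗.val i x ≠ 0} := by
      ext x
      simp [mem_free_iff]
    rw [this]
    exact isOpen_iInter_of_finite fun i => isOpen_ne_fun (𝓗.continuous_val i) continuous_const
  have hC : IsOpen (connectedComponentIn 𝓗.free x₀) := hopen.connectedComponentIn
  have hpos : 0 < volume (connectedComponentIn 𝓗.free x₀) :=
    hC.measure_pos volume ⟨x₀, mem_connectedComponentIn hx₀⟩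
  have hnull : volume (⋃ p : {p : Fin n × Fin n // p.1 ≠ p.2 ∧ 𝓗.normal p.1 ⬝ᵥ v ≠ 0 ∧
      𝓗.normal p.2 ⬝ᵥ v ≠ 0}, {x | (𝓗.normal p.1.2 ⬝ᵥ v) * 𝓗.val p.1.1 x =
        (𝓗.normal p.1.1 ⬝ᵥ v) * 𝓗.val p.1.2 x}) = 0 :=
    measure_iUnion_null fun p => 𝓗.volume_setOf_mul_val_eq
      (hgp.exists_mul_val_ne p.2.1 p.2.2.2 p.2.2.1)
  obtain ⟨x, hx, hx'⟩ := Set.not_subset.1 fun hsub =>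
    hpos.ne' (measure_mono_null hsub hnull)
  have hxm := hx
  rw [𝓗.connectedComponentIn_free hx₀] at hxm
  refine ⟨x, hxm.1, hxm.2, fun j k hjk hj hk heq => hx' ?_⟩
  exact Set.mem_iUnion.2 ⟨⟨(j, k), hjk, hj, hk⟩, heq⟩

/-- Moving from a chamber in a direction not parallel to all hyperplanes, forwards or backwards,
one leaves it through a facet transversal to that direction. -/
theorem GeneralPosition.exists_flip {𝓗 : Arrangement d n} (hgp : 𝓗.GeneralPosition)
    {v : Fin d → ℝ} {j₀ : Fin n} (hj₀ : 𝓗.normal j₀ ⬝ᵥ v ≠ 0) {x₀ : Fin d → ℝ}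
    (hx₀ : x₀ ∈ 𝓗.free) :
    ∃ j, 𝓗.normal j ⬝ᵥ v ≠ 0 ∧ ∃ y ∈ 𝓗.free, 𝓗.signs y = flipAt (𝓗.signs x₀) j := by
  obtain ⟨x, hx, hsx, hgen⟩ := hgp.exists_generic_point v hx₀
  rw [← hsx]
  rw [mem_free_iff] at hx
  -- `u j` is the inverse of the time at which the line crosses the `j`-th hyperplane
  set u : Fin n → ℝ := fun j => -(𝓗.normal j ⬝ᵥ v) / 𝓗.val j x with hu
  have hval : ∀ i t, 𝓗.val i (x + t • v) = 𝓗.val i x * (1 - t * u i) := by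
    intro i t
    rw [val_add_smul, hu]
    have := hx i
    field_simp
    ring
  have hu0 : ∀ i, u i = 0 ↔ 𝓗.normal i ⬝ᵥ v = 0 := by
    intro i
    simp [hu, hx i]
  have hinj : ∀ j k, j ≠ k → u j ≠ 0 → u j ≠ u k := by
    intro j k hjk hj heq
    have hk : u k ≠ 0 := heq ▸ hj
    refine hgen j k hjk (mt (hu0 j).2 hj) (mt (hu0 k).2 hk) ?_
    have h1 := hx j
    have h2 := hx k
    simp only [hu] at heq
    field_simp at heq
    linarith
  -- cross the first hyperplane on the side `ε` of the line
  have main : ∀ ε : ℝ, ε ≠ 0 → 0 < ε * u j₀ →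
      ∃ j, 𝓗.normal j ⬝ᵥ v ≠ 0 ∧ ∃ y ∈ 𝓗.free, 𝓗.signs y = flipAt (𝓗.signs x) j := by
    intro ε hε hpos
    obtain ⟨j, -, hj⟩ := Finset.exists_max_image Finset.univ (fun i => ε * u i)
      ⟨j₀, Finset.mem_univ _⟩
    have hjpos : 0 < ε * u j := hpos.trans_le (hj j₀ (Finset.mem_univ _))
    have huj : u j ≠ 0 := fun h => by simp [h] at hjpos
    have hlt : ∀ i, i ≠ j → ε * u i < ε * u j := fun i hi =>
      (hj i (Finset.mem_univ _)).lt_of_ne fun h => hinj j i hi.symm huj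
        (mul_left_cancel₀ hε h).symm
    obtain ⟨c, hc0, hcj, hc⟩ : ∃ c, 0 < c ∧ c < ε * u j ∧ ∀ i, i ≠ j → ε * u i < c := by
      obtain ⟨k, hk, hkmax⟩ := Finset.exists_max_image
        (insert 0 ((Finset.univ.erase j).image fun i => ε * u i)) id
        (Finset.insert_nonempty _ _)
      have hkj : k < ε * u j := by
        simp only [mem_insert, mem_image, mem_erase, mem_univ, and_true] at hk
        rcases hk with rfl | ⟨i, hi, rfl⟩
        · exact hjpos
        · exact hlt i hi
      have hk0 : 0 ≤ k := hkmax 0 (by simp)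
      obtain ⟨c, hkc, hcj⟩ := exists_between hkj
      refine ⟨c, hk0.trans_lt hkc, hcj, fun i hi => lt_of_le_of_lt ?_ hkc⟩
      exact hkmax (ε * u i) (mem_insert_of_mem (mem_image_of_mem _ (by simp [hi])))
    have hfac : ∀ i, 1 - ε / c * u i = (c - ε * u i) / c := by
      intro i
      field_simp
    have hyj : 1 - ε / c * u j < 0 := by
      rw [hfac]
      exact div_neg_of_neg_of_pos (by linarith) hc0
    have hyi : ∀ i, i ≠ j → 0 < 1 - ε / c * u i := fun i hi => by
      rw [hfac]
      exact div_pos (by linarith [hc i hi]) hc0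
    refine ⟨j, mt (hu0 j).2 huj, x + (ε / c) • v, ?_, ?_⟩
    · rw [mem_free_iff]
      intro i
      rw [hval]
      refine mul_ne_zero (hx i) ?_
      by_cases hi : i = j
      · exact hi ▸ hyj.ne
      · exact (hyi i hi).ne'
    · rw [eq_flipAt_iff]
      refine ⟨?_, fun i hi => ?_⟩
      · rw [Ne, signs_eq_iff, hval]
        rcases (hx j).lt_or_gt with h | h
        · have := mul_pos_of_neg_of_neg h hyj
          exact fun hh => lt_asymm h (hh.2 this)
        · have := mul_neg_of_pos_of_neg h hyj
          exact fun hh => lt_asymm this (hh.1 h)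
      · rw [signs_eq_iff, hval]
        exact (mul_pos_iff_of_pos_right (hyi i hi)).symm
  rcases lt_or_gt_of_ne (mt (hu0 j₀).1 hj₀) with h | h
  · exact main (-1) (by norm_num) (by linarith)
  · exact main 1 one_ne_zero (by linarith)

/-- Every chamber has at least `d` neighbours. -/
theorem GeneralPosition.le_card_flips {𝓗 : Arrangement d n} (hgp : 𝓗.GeneralPosition)
    (hn : d ≤ n) (C : 𝓗.chambers) (I : Finset (Fin n))
    (hI : ∀ i (C' : 𝓗.chambers), 𝓗.chamberSigns C' = flipAt (𝓗.chamberSigns C) i → i ∈ I) :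
    d ≤ #I := by
  by_contra! hlt
  obtain ⟨v, hv, hv0⟩ : ∃ v : Fin d → ℝ, v ≠ 0 ∧ ∀ i ∈ I, 𝓗.normal i ⬝ᵥ v = 0 := by
    let M : Matrix I (Fin d) ℝ := Matrix.of fun i => 𝓗.normal i
    have hker : LinearMap.ker M.mulVecLin ≠ ⊥ :=
      LinearMap.ker_ne_bot_of_finrank_lt (by simpa using hlt)
    obtain ⟨v, hv, hne⟩ := Submodule.exists_mem_ne_zero_of_ne_bot hker
    refine ⟨v, hne, fun i hi => ?_⟩
    rw [LinearMap.mem_ker] at hv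
    exact congrFun hv ⟨i, hi⟩
  obtain ⟨j₀, hj₀⟩ := hgp.exists_normal_ne hn hv
  obtain ⟨j, hj, y, hy, hys⟩ := hgp.exists_flip hj₀ (𝓗.point_mem_free C)
  obtain ⟨C', hC'⟩ := 𝓗.exists_chamberSigns_eq hy
  exact hj (hv0 j (hI j C' (hC'.trans hys)))

/-- Pairs of a sign vector in `S` and a coordinate whose flip leads to a chamber outside `S` give
distinct boundary edges. -/
theorem card_le_ncard_edgeBoundary (S : Set 𝓗.chambers) (P : Finset ((Fin n → Bool) × Fin n))
    (hP : ∀ p ∈ P, ∃ C ∈ S, ∃ C' ∉ S, 𝓗.chamberSigns C = p.1 ∧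
      𝓗.chamberSigns C' = flipAt p.1 p.2) :
    #P ≤ (𝓗.edgeBoundary S).ncard := by
  rcases P.eq_empty_or_nonempty with rfl | ⟨p₀, hp₀⟩
  · simp
  have : Nonempty 𝓗.chambers := ⟨(hP p₀ hp₀).choose⟩
  choose! f hf g hg hfs hgs using hP
  rw [← Set.ncard_coe_finset]
  refine Set.ncard_le_ncard_of_injOn (fun p => s(f p, g p)) ?_ ?_ (Set.toFinite _)
  · intro p hp
    rw [mem_coe] at hp
    refine ⟨?_, f p, hf p hp, g p, hg p hp, rfl⟩
    rw [SimpleGraph.mem_edgeSet]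
    exact 𝓗.adj_of_eq_flipAt (by rw [hgs p hp, hfs p hp])
  · intro p hp q hq h
    rw [mem_coe] at hp hq
    simp only [Sym2.eq_iff] at h
    rcases h with ⟨h1, h2⟩ | ⟨h1, h2⟩
    · have e1 : p.1 = q.1 := by rw [← hfs p hp, ← hfs q hq, h1]
      have e2 : flipAt p.1 p.2 = flipAt p.1 q.2 := by
        rw [← hgs p hp, h2, hgs q hq, e1]
      refine Prod.ext e1 (by_contra fun hne => ?_)
      have := congrFun e2 p.2
      rw [flipAt_same, flipAt_of_ne _ hne] at this
      simp at this
    · exact absurd (h1 ▸ hf p hp) (hg q hq)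

end Arrangement

theorem stmt1 {d n : ℕ} (𝓗 : Arrangement d n) (hgp : 𝓗.GeneralPosition) (hn : d ≤ n)
    (S : Set 𝓗.chambers) (hS : (S.ncard : ℝ) ≤ 2 ^ ((d : ℤ) - 1)) :
    S.ncard ≤ (𝓗.edgeBoundary S).ncard := by
  classical
  rcases d with _ | k
  · have h : (S.ncard : ℝ) < 1 := hS.trans_lt (by norm_num)
    have h0 : S.ncard = 0 := by
      have : S.ncard < 1 := by exact_mod_cast h
      omega
    simp [h0]
  have hSk : S.ncard ≤ 2 ^ k := by
    have : ((k + 1 : ℕ) : ℤ) - 1 = (k : ℤ) := by push_cast; ring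
    rw [this, zpow_natCast] at hS
    exact_mod_cast hS
  have hfin : (𝓗.chamberSigns '' S).Finite := Set.toFinite _
  set T : Finset (Fin n → Bool) := hfin.toFinset with hT
  have hmemT : ∀ s, s ∈ T ↔ ∃ C ∈ S, 𝓗.chamberSigns C = s := by
    intro s
    rw [hT, Set.Finite.mem_toFinset]
    rfl
  have hcard : #T = S.ncard := by
    rw [hT, ← Set.ncard_eq_toFinset_card _ hfin,
      Set.ncard_image_of_injective _ 𝓗.chamberSigns_injective]
  have hinner := sum_card_filter_flipAt_le Finset.univ T (hcard.trans_le hSk)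
  set P : Finset ((Fin n → Bool) × Fin n) :=
    {p ∈ T ×ˢ Finset.univ | (∃ C, 𝓗.chamberSigns C = flipAt p.1 p.2) ∧ flipAt p.1 p.2 ∉ T}
    with hP
  have hbd : #P ≤ (𝓗.edgeBoundary S).ncard := by
    refine 𝓗.card_le_ncard_edgeBoundary S P fun p hp => ?_
    simp only [hP, mem_filter, mem_product, mem_univ, and_true] at hp
    obtain ⟨hpT, ⟨C', hC'⟩, hnot⟩ := hp
    obtain ⟨C, hC, hCs⟩ := (hmemT _).1 hpT
    exact ⟨C, hC, C', fun h => hnot ((hmemT _).2 ⟨C', h, hC'⟩), hCs, hC'⟩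
  have hPsum : #P = ∑ s ∈ T, #{i : Fin n | (∃ C, 𝓗.chamberSigns C = flipAt s i) ∧
      flipAt s i ∉ T} := by
    simp only [hP, Finset.card_filter, Finset.sum_product]
  have hQsum : ∑ i : Fin n, #{s ∈ T | flipAt s i ∈ T} =
      ∑ s ∈ T, #{i : Fin n | flipAt s i ∈ T} := by
    simp only [Finset.card_filter]
    exact Finset.sum_comm
  have hdeg : #T * (k + 1) ≤ #P + ∑ i : Fin n, #{s ∈ T | flipAt s i ∈ T} := by
    rw [hPsum, hQsum, ← Finset.sum_add_distrib, ← smul_eq_mul]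
    refine Finset.card_nsmul_le_sum _ _ _ fun s hs => ?_
    obtain ⟨C, hC, rfl⟩ := (hmemT s).1 hs
    refine le_trans (hgp.le_card_flips hn C _ fun i C' h => ?_) (Finset.card_union_le _ _)
    simp only [mem_union, mem_filter, mem_univ, true_and]
    by_cases hi : flipAt (𝓗.chamberSigns C) i ∈ T
    · exact Or.inr hi
    · exact Or.inl ⟨⟨C', h⟩, hi⟩
  rw [← hcard]
  refine le_trans ?_ hbd
  nlinarith
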